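/- If G(g,k,ℓ) and G(g',k',ℓ') are two graphs in the family S_P with the same number of vertices, i.e. g + 2k + 2ℓ = g' + 2k' + 2ℓ', then I(G(g,k,ℓ),x) = I(G(g',k',ℓ'),x) as polynomials. -/

import Mathlib

open Polynomial SimpleGraph

/-- A finset of vertices is independent: pairwise nonadjacent. -/
def IsIndepFinset {V : Type*} (G : SimpleGraph V) (s : Finset V) : Prop :=
  ∀ u ∈ s, ∀ v ∈ s, ¬ G.Adj u v

open Classical in
/-- The independence polynomial of a finite graph, with real coefficients. -/
noncomputable def indepPoly {V : Type*} [Fintype V] (G : SimpleGraph V) : Polynomial ℝ :=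
  ∑ s : Finset V, if IsIndepFinset G s then (X : Polynomial ℝ) ^ s.card else 0

/-- `xi G` : the largest real root of the independence polynomial of `G`. -/
noncomputable def xi {V : Type*} [Fintype V] (G : SimpleGraph V) : ℝ :=
  sSup {x : ℝ | (indepPoly G).eval x = 0}

/-- `Pre H G` (`H ⪯ G`) : `I(H,x) ≥ I(G,x)` for all `x ∈ [ξ(G), 0]`. -/
def Pre {V W : Type*} [Fintype V] [Fintype W] (H : SimpleGraph W) (G : SimpleGraph V) : Prop :=
  ∀ x ∈ Set.Icc (xi G) 0, (indepPoly G).eval x ≤ (indepPoly H).eval x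

/-- `SPre H G` (`H ≺ G`). -/
def SPre {V W : Type*} [Fintype V] [Fintype W] (H : SimpleGraph W) (G : SimpleGraph V) : Prop :=
  Pre H G ∧ indepPoly H ≠ indepPoly G

open Classical in
/-- A graph is well-covered if all maximal independent sets have the same size. -/
def WellCovered {V : Type*} (G : SimpleGraph V) : Prop :=
  ∀ s t : Finset V,
    IsIndepFinset G s → (∀ v ∉ s, ¬ IsIndepFinset G (insert v s)) →
    IsIndepFinset G t → (∀ v ∉ t, ¬ IsIndepFinset G (insert v t)) →
    s.card = t.card

/-- A connected unicyclic graph: connected with as many edges as vertices. -/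
def Unicyclic {V : Type*} [Fintype V] (G : SimpleGraph V) : Prop :=
  G.Connected ∧ G.edgeSet.ncard = Fintype.card V

/-- The graph star (corona with `K₁`) of `G`: each vertex `inl v` gets a pendant
vertex `inr v`. -/
def corona {V : Type*} (G : SimpleGraph V) : SimpleGraph (V ⊕ V) :=
  SimpleGraph.fromRel (fun a b =>
    match a, b with
    | Sum.inl u, Sum.inl v => G.Adj u v
    | Sum.inl u, Sum.inr v => u = v
    | _, _ => False)

/-- `Ugraph n` (`U_n`, `n ≥ 3`): a triangle `0,1,2` with `n - 3` pendant vertices attached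
to vertex `0`. -/
def Ugraph (n : ℕ) : SimpleGraph (Fin n) :=
  SimpleGraph.fromRel (fun i j => i.val = 0 ∨ (i.val = 1 ∧ j.val = 2))

/-- `Dgraph n` (`D_n`, `n ≥ 4`): a path `0,1,...,n-1` plus the chord `{0,2}`, i.e. a
triangle with a path on `n - 3` vertices attached. -/
def Dgraph (n : ℕ) : SimpleGraph (Fin n) :=
  SimpleGraph.fromRel (fun i j => j.val = i.val + 1 ∨ (i.val = 0 ∧ j.val = 2))

/-- `starGraph n` (`S_n = K_{1,n-1}`): vertex `0` adjacent to all other vertices. -/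
def starGraph (n : ℕ) : SimpleGraph (Fin n) :=
  SimpleGraph.fromRel (fun i _ => i.val = 0)

/-- `Mgraph n` (`M_n`, odd `n ≥ 5`): a triangle `0,1,2` with `(n-3)/2` paths of length two
attached at vertex `0`; the middle vertices are the odd indices `3,5,...,n-2` and the leaf
attached to middle vertex `i` is `i + 1`. -/
def Mgraph (n : ℕ) : SimpleGraph (Fin n) :=
  SimpleGraph.fromRel (fun i j =>
    (i.val = 0 ∧ (j.val ≤ 2 ∨ j.val % 2 = 1)) ∨ (i.val = 1 ∧ j.val = 2) ∨
    (i.val % 2 = 1 ∧ 3 ≤ i.val ∧ j.val = i.val + 1))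

/-- `SPgraph g k ℓ` (`G(g,k,ℓ)`, for `g ∈ {3,5}` and `k + ℓ ≥ 1`): a cycle on the vertices
`0,...,g-1`, a copy of `P_k*` on the vertices `g,...,g+2k-1` (path vertices at even offsets,
each followed by its pendant vertex) joined to the cycle vertex `0` by an edge to the
path end `g`, and a copy of `P_ℓ*` on the vertices `g+2k,...,g+2k+2ℓ-1` joined to the cycle
vertex `2` by an edge to the path end `g+2k`. -/
def SPgraph (g k ℓ : ℕ) : SimpleGraph (Fin (g + 2*k + 2*ℓ)) :=
  SimpleGraph.fromRel (fun i j =>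
    (i.val < g ∧ j.val < g ∧ (j.val = i.val + 1 ∨ (i.val = 0 ∧ j.val = g - 1))) ∨
    (i.val = 0 ∧ 0 < k ∧ j.val = g) ∨
    (g ≤ i.val ∧ i.val < g + 2*k ∧ (i.val - g) % 2 = 0 ∧
      (j.val = i.val + 1 ∨ (j.val = i.val + 2 ∧ j.val < g + 2*k))) ∨
    (i.val = 2 ∧ 0 < ℓ ∧ j.val = g + 2*k) ∨
    (g + 2*k ≤ i.val ∧ (i.val - (g + 2*k)) % 2 = 0 ∧
      (j.val = i.val + 1 ∨ j.val = i.val + 2)))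

/-- `Gtree n` (`G_{2n}`, `n ≥ 5`): the tree on `2n` vertices with path `v_1 … v_n` at
indices `0,…,n-1`, `z_1` at index `n`, `y_1, y_2` at `n+1, n+2`, `x_1, x_2` at `n+3, n+4`
(with `v_3 z_1`, `v_3 y_1`, `y_1 y_2`, `v_5 x_1`, `x_1 x_2` edges), and pendant vertices
`w_j` at index `n + j - 1` attached to `v_j` for `6 ≤ j ≤ n`. -/
def Gtree (n : ℕ) : SimpleGraph (Fin (2*n)) :=
  SimpleGraph.fromRel (fun a b =>
    (a.val + 1 = b.val ∧ b.val < n) ∨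
    (a.val = 2 ∧ (b.val = n ∨ b.val = n + 1)) ∨
    (a.val = n + 1 ∧ b.val = n + 2) ∨
    (a.val = 4 ∧ b.val = n + 3) ∨
    (a.val = n + 3 ∧ b.val = n + 4) ∨
    (5 ≤ a.val ∧ a.val < n ∧ b.val = n + a.val))

/-!
Deleting the last path vertex of a tail of `G(g,k,ℓ)` and its pendant vertex shows that the
polynomial `f_g(k,ℓ) = I(G(g,k,ℓ), x)` satisfies, in `k` and in `ℓ` separately, the recurrence
`f(n + 2) = (1 + x) f(n + 1) + x (1 + x) f(n)`. So `f_g` is determined by its values on `{0, 1}²`.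
If `s` is the sequence with the same recurrence and `s 0 = 1 + 3x`, `s 1 = 1 + 5x + 5x²`, these
values show that `f_3(k,ℓ) = s (k + ℓ)` and `f_5(k,ℓ) = s (k + ℓ + 1)`, which in both cases depends
only on the order `g + 2k + 2ℓ`.
-/

section IndepPolyOn

variable {V : Type*} (G : SimpleGraph V)

open Classical in
/-- The independence polynomial of the subgraph of `G` induced by the finite vertex set `S`. The
vertex type stays `V`, so that vertices can be deleted one at a time. -/
noncomputable def indepPolyOn (S : Finset V) : ℝ[X] :=
  ∑ s ∈ S.powerset with IsIndepFinset G s, X ^ s.card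

variable {G}

theorem indepPolyOn_univ [Fintype V] : indepPolyOn G Finset.univ = indepPoly G := by
  rw [indepPolyOn, indepPoly, Finset.powerset_univ, Finset.sum_filter]

theorem isIndepFinset_map {W : Type*} {H : SimpleGraph W} (f : G ↪g H) {s : Finset V} :
    IsIndepFinset H (s.map f.toEmbedding) ↔ IsIndepFinset G s := by
  simp [IsIndepFinset]

theorem indepPolyOn_map {W : Type*} {H : SimpleGraph W} (f : G ↪g H) (S : Finset V) :
    indepPolyOn H (S.map f.toEmbedding) = indepPolyOn G S := by
  classical
  symm
  refine Finset.sum_bij (fun s _ ↦ s.map f.toEmbedding) (fun s hs ↦ ?_)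
    (fun s _ t _ h ↦ Finset.map_injective _ h) (fun t ht ↦ ?_) (fun s _ ↦ by simp)
  · simpa [isIndepFinset_map] using hs
  · obtain ⟨htS, ht⟩ := Finset.mem_filter.1 ht
    obtain ⟨s, hs, rfl⟩ := Finset.subset_map_iff.1 (Finset.mem_powerset.1 htS)
    exact ⟨s, by simpa [hs] using (isIndepFinset_map f).1 ht, rfl⟩

theorem indepPolyOn_empty : indepPolyOn G ∅ = 1 := by
  classical
  have indep_empty : IsIndepFinset G ∅ := by simp [IsIndepFinset]
  rw [indepPolyOn, Finset.powerset_empty, Finset.filter_singleton, if_pos indep_empty,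
    Finset.sum_singleton, Finset.card_empty, pow_zero]

variable [DecidableEq V]

theorem isIndepFinset_insert {v : V} {s : Finset V} :
    IsIndepFinset G (insert v s) ↔ IsIndepFinset G s ∧ ∀ w ∈ s, ¬ G.Adj v w := by
  simp only [IsIndepFinset, Finset.forall_mem_insert, G.irrefl, not_false_eq_true, true_and,
    G.adj_comm _ v, forall_and]
  tauto

theorem indepPolyOn_insert [DecidableRel G.Adj] {v : V} {S : Finset V} (hv : v ∉ S) :
    indepPolyOn G (insert v S) =
      indepPolyOn G S + X * indepPolyOn G {w ∈ S | ¬ G.Adj v w} := by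
  classical
  have subset_iff (s : Finset V) : s ⊆ {w ∈ S | ¬ G.Adj v w} ↔ s ⊆ S ∧ ∀ w ∈ s, ¬ G.Adj v w := by
    simp only [Finset.subset_iff, Finset.mem_filter, forall_and]
  have indep_containing : ({s ∈ S.powerset | IsIndepFinset G (insert v s)} : Finset (Finset V)) =
      {s ∈ ({w ∈ S | ¬ G.Adj v w} : Finset V).powerset | IsIndepFinset G s} := by
    ext s
    simp only [Finset.mem_filter, Finset.mem_powerset, subset_iff, isIndepFinset_insert]
    tauto
  simp only [indepPolyOn, Finset.sum_filter, Finset.sum_powerset_insert hv]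
  simp only [← Finset.sum_filter, indep_containing, Finset.mul_sum]
  refine congrArg _ (Finset.sum_congr rfl fun s hs ↦ ?_)
  have hsS := ((subset_iff s).1 (Finset.mem_powerset.1 (Finset.mem_filter.1 hs).1)).1
  rw [Finset.card_insert_of_notMem fun h ↦ hv (hsS h), pow_succ']

-- Unlike a `Finset` filter, a filter of an explicit list is evaluated by `simp`, so that this form
-- of vertex deletion computes the polynomials of small graphs.
theorem indepPolyOn_toFinset_cons [DecidableRel G.Adj] {v : V} {L : List V} (hv : v ∉ L) :
    indepPolyOn G (v :: L).toFinset =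
      indepPolyOn G L.toFinset + X * indepPolyOn G (L.filter (¬ G.Adj v ·)).toFinset := by
  rw [List.toFinset_cons, indepPolyOn_insert (by simpa using hv), List.toFinset_filter]
  simp

theorem indepPolyOn_insert_isolated {v : V} {S : Finset V} (hv : v ∉ S)
    (h : ∀ w ∈ S, ¬ G.Adj v w) : indepPolyOn G (insert v S) = (1 + X) * indepPolyOn G S := by
  classical
  rw [indepPolyOn_insert hv, Finset.filter_true_of_mem h]
  ring

theorem indepPolyOn_insert_leaf {u v : V} {S : Finset V} (hv : v ∉ insert u S) (huv : G.Adj v u)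
    (h : ∀ w ∈ S, ¬ G.Adj v w) :
    indepPolyOn G (insert v (insert u S)) =
      indepPolyOn G (insert u S) + X * indepPolyOn G S := by
  classical
  rw [indepPolyOn_insert hv, Finset.filter_insert, if_neg (not_not.2 huv),
    Finset.filter_true_of_mem h]

-- `u` and its pendant `u'` prolong a tail whose last path vertex is `p`, with pendant `p'`: without
-- `u`, the vertex `u'` is isolated, and without `u` and `p`, so is `p'`.
theorem indepPolyOn_insert_star_path {S : Finset V} {p p' u u' : V} (hp' : p' ∉ S)
    (hu : u ∉ insert p' (insert p S)) (hu' : u' ∉ insert u (insert p' (insert p S)))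
    (hup : G.Adj u p) (huu' : G.Adj u' u) (hp'S : ∀ w ∈ S, ¬ G.Adj p' w)
    (huS : ∀ w ∈ insert p' S, ¬ G.Adj u w)
    (hu'S : ∀ w ∈ insert p' (insert p S), ¬ G.Adj u' w) :
    indepPolyOn G (insert u' (insert u (insert p' (insert p S)))) =
      (1 + X) * indepPolyOn G (insert p' (insert p S)) + X * (1 + X) * indepPolyOn G S := by
  have delete_u : indepPolyOn G (insert u (insert p' (insert p S))) =
      indepPolyOn G (insert p' (insert p S)) + X * indepPolyOn G (insert p' S) := by
    rw [Finset.insert_comm p' p] at hu ⊢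
    exact indepPolyOn_insert_leaf hu hup huS
  rw [indepPolyOn_insert_leaf hu' huu' hu'S, delete_u, indepPolyOn_insert_isolated hp' hp'S]
  ring

end IndepPolyOn

theorem eq_comp_add_of_rec {R : Type*} [Semiring R] {a b : R} {F : ℕ → ℕ → R} {s : ℕ → R}
    (hs : ∀ n, s (n + 2) = a * s (n + 1) + b * s n)
    (hl : ∀ k l, F k (l + 2) = a * F k (l + 1) + b * F k l)
    (hk : ∀ k l, F (k + 2) l = a * F (k + 1) l + b * F k l)
    (h00 : F 0 0 = s 0) (h01 : F 0 1 = s 1) (h10 : F 1 0 = s 1) (h11 : F 1 1 = s 2) (k l : ℕ) :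
    F k l = s (k + l) := by
  have row (k : ℕ) (h0 : F k 0 = s k) (h1 : F k 1 = s (k + 1)) (l : ℕ) : F k l = s (k + l) := by
    induction l using Nat.twoStepInduction with
    | zero => exact h0
    | one => exact h1
    | more l ih ih' => rw [hl, ih, ih']; exact (hs _).symm
  induction k using Nat.twoStepInduction with
  | zero => exact row 0 h00 h01 l
  | one => exact row 1 h10 h11 l
  | more k ih ih' => rw [hk, ih, ih', add_right_comm k 2, hs, add_right_comm k 1]

section SPgraph

/-- The embedding of `G(g,k,ℓ)` into the graph `G(g,k+m,ℓ+n)` with longer tails. It fixes the cycle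
and the first tail, and moves the second tail past the `2 * m` new vertices of the first one. -/
def SPgraph.prolong {g : ℕ} (hg : 3 ≤ g) (k l m n : ℕ) :
    SPgraph g k l ↪g SPgraph g (k + m) (l + n) where
  toFun v := ⟨if v.val < g + 2 * k then v.val else v.val + 2 * m, by split_ifs <;> omega⟩
  inj' a b h := by
    simp only [Fin.mk.injEq] at h
    split_ifs at h <;> omega
  map_rel_iff' {a b} := by
    dsimp only [DFunLike.coe]
    simp only [SPgraph, SimpleGraph.fromRel_adj, ne_eq, Fin.ext_iff]
    split_ifs <;>
    · refine and_congr ?_ (or_congr ?_ ?_)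
      · omega
      all_goals refine or_congr ?_ (or_congr ?_ (or_congr ?_ (or_congr ?_ ?_))) <;> omega

theorem SPgraph.val_prolong {g k l : ℕ} (hg : 3 ≤ g) (m n : ℕ) (v : Fin (g + 2 * k + 2 * l)) :
    (SPgraph.prolong hg k l m n v).val =
      if v.val < g + 2 * k then v.val else v.val + 2 * m := rfl

theorem SPgraph_adj_leaf {g k l : ℕ} {v w : Fin (g + 2 * k + 2 * l)} (hg : 3 ≤ g)
    (hv : g ≤ v.val) (hodd : (v.val - g) % 2 = 1) :
    (SPgraph g k l).Adj v w ↔ v.val = w + 1 := by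
  simp only [SPgraph, SimpleGraph.fromRel_adj, ne_eq, Fin.ext_iff]
  constructor
  · rintro ⟨-, (h | h | h | h | h) | (h | h | h | h | h)⟩ <;> omega
  · intro h
    refine ⟨by omega, Or.inr ?_⟩
    omega

theorem SPgraph_adj_path {g k l : ℕ} {v w : Fin (g + 2 * k + 2 * l)} (hg : 3 ≤ g)
    (hv : g < v.val) (heven : (v.val - g) % 2 = 0) (hstart : v.val ≠ g + 2 * k) :
    (SPgraph g k l).Adj v w ↔
      v.val = w + 2 ∨ w.val = v + 1 ∨ w.val = v + 2 ∧ w.val ≠ g + 2 * k := by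
  simp only [SPgraph, SimpleGraph.fromRel_adj, ne_eq, Fin.ext_iff]
  constructor
  · rintro ⟨-, (h | h | h | h | h) | (h | h | h | h | h)⟩ <;> omega
  · rintro (h | h | h)
    · refine ⟨by omega, Or.inr ?_⟩
      omega
    all_goals
      refine ⟨by omega, Or.inl ?_⟩
      omega

-- The vertices `q, …, q + 3` are the last two path vertices of one of the two tails, each followed
-- by its pendant vertex.
theorem indepPoly_SPgraph_delete_tail_end {g k l q : ℕ} (hg : 3 ≤ g) (hq : g ≤ q)
    (hend : q + 4 = g + 2 * k ∨ 2 ≤ l ∧ q + 4 = g + 2 * k + 2 * l) :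
    indepPoly (SPgraph g k l) =
      (1 + X) * indepPolyOn (SPgraph g k l) {v | v.val < q + 2 ∨ q + 4 ≤ v.val} +
        X * (1 + X) * indepPolyOn (SPgraph g k l) {v | v.val < q ∨ q + 4 ≤ v.val} := by
  obtain ⟨p, hp⟩ : ∃ p : Fin (g + 2 * k + 2 * l), p.val = q := ⟨⟨q, by omega⟩, rfl⟩
  obtain ⟨p', hp'⟩ : ∃ p' : Fin (g + 2 * k + 2 * l), p'.val = q + 1 := ⟨⟨q + 1, by omega⟩, rfl⟩
  obtain ⟨u, hu⟩ : ∃ u : Fin (g + 2 * k + 2 * l), u.val = q + 2 := ⟨⟨q + 2, by omega⟩, rfl⟩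
  obtain ⟨u', hu'⟩ : ∃ u' : Fin (g + 2 * k + 2 * l), u'.val = q + 3 := ⟨⟨q + 3, by omega⟩, rfl⟩
  have adj_p' (w) : (SPgraph g k l).Adj p' w ↔ w.val = q := by
    rw [SPgraph_adj_leaf hg (by omega) (by omega)]
    omega
  have adj_u' (w) : (SPgraph g k l).Adj u' w ↔ w.val = q + 2 := by
    rw [SPgraph_adj_leaf hg (by omega) (by omega)]
    omega
  have adj_u (w) : (SPgraph g k l).Adj u w ↔ w.val = q ∨ w.val = q + 3 := by
    rw [SPgraph_adj_path hg (by omega) (by omega) (by omega)]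
    omega
  set S : Finset (Fin (g + 2 * k + 2 * l)) := {v | v.val < q ∨ q + 4 ≤ v.val}
  set T : Finset (Fin (g + 2 * k + 2 * l)) := {v | v.val < q + 2 ∨ q + 4 ≤ v.val}
  have T_eq : T = insert p' (insert p S) := by
    ext v
    simp only [S, T, Finset.mem_filter_univ, Finset.mem_insert, Fin.ext_iff, hp, hp']
    omega
  have univ_eq : Finset.univ = insert u' (insert u T) := by
    ext v
    simp only [T, Finset.mem_univ, Finset.mem_filter_univ, Finset.mem_insert, Fin.ext_iff, hu, hu',
      true_iff]
    omega
  rw [← indepPolyOn_univ, univ_eq, T_eq]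
  refine indepPolyOn_insert_star_path ?_ ?_ ?_ ((adj_u p).2 (Or.inl hp)) ((adj_u' u).2 hu) ?_ ?_ ?_
  all_goals
    simp only [S, Finset.mem_insert, Finset.mem_filter_univ, Fin.ext_iff,
      adj_p', adj_u, adj_u', hp, hp', hu, hu']
    grind

theorem indepPolyOn_SPgraph_prolong {g : ℕ} (hg : 3 ≤ g) (k l m n : ℕ) :
    indepPolyOn (SPgraph g (k + m) (l + n))
      {v | v.val < g + 2 * k ∨ g + 2 * (k + m) ≤ v.val ∧ v.val < g + 2 * (k + m) + 2 * l} =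
      indepPoly (SPgraph g k l) := by
  rw [← indepPolyOn_univ, ← indepPolyOn_map (SPgraph.prolong hg k l m n)]
  congr 1
  ext v
  simp only [Finset.mem_filter_univ, Finset.mem_map, Finset.mem_univ, true_and,
    RelEmbedding.coe_toEmbedding, Fin.ext_iff, SPgraph.val_prolong]
  constructor
  · intro hv
    refine ⟨⟨if v.val < g + 2 * k then v.val else v.val - 2 * m, by split_ifs <;> omega⟩, ?_⟩
    dsimp only
    split_ifs <;> omega
  · rintro ⟨a, ha⟩
    split_ifs at ha <;> omega

theorem indepPoly_SPgraph_add_two_right {g : ℕ} (hg : 3 ≤ g) (k l : ℕ) :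
    indepPoly (SPgraph g k (l + 2)) =
      (1 + X) * indepPoly (SPgraph g k (l + 1)) + X * (1 + X) * indepPoly (SPgraph g k l) := by
  rw [indepPoly_SPgraph_delete_tail_end (q := g + 2 * k + 2 * l) hg (by omega) (by omega),
    ← indepPolyOn_SPgraph_prolong hg k (l + 1) 0 1, ← indepPolyOn_SPgraph_prolong hg k l 0 2]
  congr! 4 <;> omega

theorem indepPoly_SPgraph_add_two_left {g : ℕ} (hg : 3 ≤ g) (k l : ℕ) :
    indepPoly (SPgraph g (k + 2) l) =
      (1 + X) * indepPoly (SPgraph g (k + 1) l) + X * (1 + X) * indepPoly (SPgraph g k l) := by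
  rw [indepPoly_SPgraph_delete_tail_end (q := g + 2 * k) hg (by omega) (by omega),
    ← indepPolyOn_SPgraph_prolong hg (k + 1) l 1 0, ← indepPolyOn_SPgraph_prolong hg k l 2 0]
  congr! 4 <;> omega

/-- The common independence polynomial of the members of `S_P` of order `2 * n + 3`. -/
noncomputable def spPoly : ℕ → ℝ[X]
  | 0 => 1 + 3 * X
  | 1 => 1 + 5 * X + 5 * X ^ 2
  | n + 2 => (1 + X) * spPoly (n + 1) + X * (1 + X) * spPoly n

theorem spPoly_zero : spPoly 0 = 1 + 3 * X := by
  rw [spPoly]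

theorem spPoly_one : spPoly 1 = 1 + 5 * X + 5 * X ^ 2 := by
  rw [spPoly]

theorem spPoly_two : spPoly 2 = 1 + 7 * X + 14 * X ^ 2 + 8 * X ^ 3 := by
  rw [spPoly, spPoly_zero, spPoly_one]
  ring

theorem spPoly_three : spPoly 3 = 1 + 9 * X + 27 * X ^ 2 + 32 * X ^ 3 + 13 * X ^ 4 := by
  rw [spPoly, spPoly_one, spPoly_two]
  ring

theorem indepPoly_SPgraph_three (k l : ℕ) :
    indepPoly (SPgraph 3 k l) = spPoly (k + l) := by
  have base : indepPoly (SPgraph 3 0 0) = 1 + 3 * X ∧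
      indepPoly (SPgraph 3 0 1) = 1 + 5 * X + 5 * X ^ 2 ∧
      indepPoly (SPgraph 3 1 0) = 1 + 5 * X + 5 * X ^ 2 ∧
      indepPoly (SPgraph 3 1 1) = 1 + 7 * X + 14 * X ^ 2 + 8 * X ^ 3 := by
    refine ⟨?_, ?_, ?_, ?_⟩
    all_goals
      rw [← indepPolyOn_univ, ← List.toFinset_finRange]
      simp [-List.toFinset_cons, List.finRange_succ, indepPolyOn_toFinset_cons, indepPolyOn_empty,
        SPgraph]
      ring
  obtain ⟨zero_zero, zero_one, one_zero, one_one⟩ := base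
  exact eq_comp_add_of_rec (F := fun k l ↦ indepPoly (SPgraph 3 k l))
    (s := spPoly) (fun n ↦ by rw [spPoly])
    (indepPoly_SPgraph_add_two_right (by norm_num)) (indepPoly_SPgraph_add_two_left (by norm_num))
    (zero_zero.trans spPoly_zero.symm) (zero_one.trans spPoly_one.symm)
    (one_zero.trans spPoly_one.symm) (one_one.trans spPoly_two.symm) k l

theorem indepPoly_SPgraph_five (k l : ℕ) :
    indepPoly (SPgraph 5 k l) = spPoly (k + l + 1) := by
  have base : indepPoly (SPgraph 5 0 0) = 1 + 5 * X + 5 * X ^ 2 ∧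
      indepPoly (SPgraph 5 0 1) = 1 + 7 * X + 14 * X ^ 2 + 8 * X ^ 3 ∧
      indepPoly (SPgraph 5 1 0) = 1 + 7 * X + 14 * X ^ 2 + 8 * X ^ 3 ∧
      indepPoly (SPgraph 5 1 1) = 1 + 9 * X + 27 * X ^ 2 + 32 * X ^ 3 + 13 * X ^ 4 := by
    refine ⟨?_, ?_, ?_, ?_⟩
    all_goals
      rw [← indepPolyOn_univ, ← List.toFinset_finRange]
      simp [-List.toFinset_cons, List.finRange_succ, indepPolyOn_toFinset_cons, indepPolyOn_empty,
        SPgraph]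
      ring
  obtain ⟨zero_zero, zero_one, one_zero, one_one⟩ := base
  exact eq_comp_add_of_rec (F := fun k l ↦ indepPoly (SPgraph 5 k l))
    (s := fun n ↦ spPoly (n + 1)) (fun n ↦ by rw [spPoly])
    (indepPoly_SPgraph_add_two_right (by norm_num)) (indepPoly_SPgraph_add_two_left (by norm_num))
    (zero_zero.trans spPoly_one.symm) (zero_one.trans spPoly_two.symm)
    (one_zero.trans spPoly_two.symm) (one_one.trans spPoly_three.symm) k l

theorem indepPoly_SPgraph_eq_spPoly {g k l n : ℕ} (hg : g = 3 ∨ g = 5)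
    (hn : g + 2 * k + 2 * l = 2 * n + 3) : indepPoly (SPgraph g k l) = spPoly n := by
  rcases hg with rfl | rfl
  · rw [indepPoly_SPgraph_three, show k + l = n by omega]
  · rw [indepPoly_SPgraph_five, show k + l + 1 = n by omega]

end SPgraph

/-- Any two graphs in the family `S_P` with the same number of vertices have
equal independence polynomials. -/
theorem stmt11 (g k l g' k' l' : ℕ) (hg : g = 3 ∨ g = 5) (hg' : g' = 3 ∨ g' = 5)
    (hk : 1 ≤ k + l) (hk' : 1 ≤ k' + l')
    (hcard : g + 2*k + 2*l = g' + 2*k' + 2*l') :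
    indepPoly (SPgraph g k l) = indepPoly (SPgraph g' k' l') := by
  obtain ⟨n, hn⟩ : ∃ n, g + 2 * k + 2 * l = 2 * n + 3 := by
    rcases hg with rfl | rfl
    exacts [⟨k + l, by omega⟩, ⟨k + l + 1, by omega⟩]
  rw [indepPoly_SPgraph_eq_spPoly hg hn, indepPoly_SPgraph_eq_spPoly hg' (hcard.symm.trans hn)]
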